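/- arXiv:2302.11319 — 3 statements merged into one kernel-verified Lean document; each statement's English description precedes it below -/
import Mathlib

section
/- Let (K, δ) be a differential field of characteristic p > 0 and let t be transcendental over K. Extend δ uniquely to K(t) by setting δ(t) = 0. Then the field of constants of K(t) equals C_K(t), the subfield of K(t) generated by the constants of K together with t. -/
/-!
Write a constant `f` of `K(t)` as `P / Q` in lowest terms with `Q` monic. On polynomials `D` is
the coefficientwise derivation `δ'`, so applying `D` to `f * Q = P` gives `P * δ' Q = Q * δ' P`,
whence `Q ∣ δ' Q` by coprimality. As `δ 1 = 0` and `Q` is monic, `δ' Q` has degree less than `Q`,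
so `δ' Q = 0`, and then `δ' P = 0`. Thus `P` and `Q` have constant coefficients.
-/

open Polynomial in
/-- The derivation of `K[X]` applying `δ` to each coefficient (so killing `X`): Mathlib's
`Differential.mapCoeffs` for the differential structure `δ`, passed explicitly. -/
noncomputable def coeffDeriv {K : Type*} [Field K] (δ : Derivation ℤ K K) :
    Derivation ℤ K[X] K[X] :=
  @Differential.mapCoeffs K _ ⟨δ⟩

open Polynomial in
lemma coeff_coeffDeriv {K : Type*} [Field K] (δ : Derivation ℤ K K) (P : K[X]) (i : ℕ) :
    (coeffDeriv δ P).coeff i = δ (P.coeff i) := rfl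

open Polynomial in
/-- On polynomials, the derivation `D` is the coefficientwise application of `δ`. -/
lemma D_algebraMap_polynomial {K : Type*} [Field K] (δ : Derivation ℤ K K)
    (D : Derivation ℤ (RatFunc K) (RatFunc K))
    (hD : ∀ a : K, D (algebraMap K (RatFunc K) a) = algebraMap K (RatFunc K) (δ a))
    (hX : D RatFunc.X = 0) (P : K[X]) :
    D (algebraMap K[X] (RatFunc K) P) = algebraMap K[X] (RatFunc K) (coeffDeriv δ P) := by
  have hC : ∀ a : K, algebraMap K[X] (RatFunc K) (C a) = algebraMap K (RatFunc K) a :=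
    fun a => (IsScalarTower.algebraMap_apply K K[X] (RatFunc K) a).symm
  induction P using Polynomial.induction_on' with
  | add P Q hP hQ => simp only [map_add, hP, hQ]
  | monomial n a =>
    have h : coeffDeriv δ (monomial n a) = monomial n (δ a) := by
      ext i
      simp only [coeff_coeffDeriv, coeff_monomial]
      split_ifs <;> simp
    rw [h, ← C_mul_X_pow_eq_monomial, ← C_mul_X_pow_eq_monomial, map_mul (algebraMap _ _),
      map_mul (algebraMap _ _), map_pow, hC, hC, RatFunc.algebraMap_X, D.leibniz,
      D.leibniz_pow, hX, hD]
    simp [mul_comm]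

open Polynomial in
/-- A polynomial killed by the coefficientwise derivation lies in the subfield generated by the
constants of `K` and the variable. -/
lemma algebraMap_mem_closure {K : Type*} [Field K] (δ : Derivation ℤ K K) (P : K[X])
    (hP : coeffDeriv δ P = 0) :
    algebraMap K[X] (RatFunc K) P ∈
      Subfield.closure ((algebraMap K (RatFunc K)) '' {a : K | δ a = 0} ∪ {RatFunc.X}) := by
  rw [P.as_sum_range_C_mul_X_pow, map_sum]
  refine sum_mem fun i _ => ?_
  rw [map_mul, map_pow, RatFunc.algebraMap_X]
  refine mul_mem ?_ (pow_mem ?_ i)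
  · apply Subfield.subset_closure
    refine Or.inl ⟨P.coeff i, ?_, IsScalarTower.algebraMap_apply K K[X] (RatFunc K) _⟩
    change δ (P.coeff i) = 0
    rw [← coeff_coeffDeriv, hP, coeff_zero]
  · exact Subfield.subset_closure (Or.inr rfl)

open Polynomial in
/-- A monic polynomial dividing its coefficientwise derivative has constant coefficients, because
the leading coefficient `1` is killed and the degree drops. -/
lemma coeffDeriv_eq_zero_of_monic_of_dvd {K : Type*} [Field K] (δ : Derivation ℤ K K) (Q : K[X])
    (hQ : Q.Monic) (h : Q ∣ coeffDeriv δ Q) : coeffDeriv δ Q = 0 := by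
  refine eq_zero_of_dvd_of_degree_lt h ?_
  rw [degree_eq_natDegree hQ.ne_zero, degree_lt_iff_coeff_zero]
  intro m hm
  rw [coeff_coeffDeriv]
  rcases hm.eq_or_lt with rfl | hm
  · rw [hQ.coeff_natDegree, δ.map_one_eq_zero]
  · rw [coeff_eq_zero_of_natDegree_lt hm, map_zero]

/-- For `(K, δ)` of characteristic `p > 0` and the derivation `D` on `K(t)` extending
`δ` with `D t = 0`, the constants of `K(t)` form exactly the subfield `C_K(t)` generated
by the constants of `K` together with `t`. -/
theorem stmt3 {K : Type*} [Field K] (p : ℕ) [Fact p.Prime] [CharP K p]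
    (δ : Derivation ℤ K K)
    (D : Derivation ℤ (RatFunc K) (RatFunc K))
    (hD : ∀ a : K, D (algebraMap K (RatFunc K) a) = algebraMap K (RatFunc K) (δ a))
    (hX : D RatFunc.X = 0) :
    {f : RatFunc K | D f = 0} =
      (Subfield.closure ((algebraMap K (RatFunc K)) '' {a : K | δ a = 0} ∪ {RatFunc.X})
        : Set (RatFunc K)) := by
  apply Set.Subset.antisymm
  · intro f hf
    have hf : D f = 0 := hf
    have hinj := RatFunc.algebraMap_injective K
    have hQ0 : algebraMap _ (RatFunc K) f.denom ≠ 0 :=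
      RatFunc.algebraMap_ne_zero f.denom_ne_zero
    have hfPQ : f * algebraMap _ (RatFunc K) f.denom = algebraMap _ (RatFunc K) f.num := by
      rw [← eq_div_iff hQ0, RatFunc.num_div_denom]
    have h1 : f * algebraMap _ (RatFunc K) (coeffDeriv δ f.denom) =
        algebraMap _ (RatFunc K) (coeffDeriv δ f.num) := by
      rw [← D_algebraMap_polynomial δ D hD hX, ← D_algebraMap_polynomial δ D hD hX, ← hfPQ,
        D.leibniz, hf, smul_zero, add_zero, smul_eq_mul]
    have h2 : f.num * coeffDeriv δ f.denom = f.denom * coeffDeriv δ f.num := by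
      apply hinj
      rw [map_mul, map_mul, ← h1, ← hfPQ]
      ring
    have hQ : coeffDeriv δ f.denom = 0 :=
      coeffDeriv_eq_zero_of_monic_of_dvd δ _ f.monic_denom
        (f.isCoprime_num_denom.symm.dvd_of_dvd_mul_left ⟨_, h2⟩)
    have hP : coeffDeriv δ f.num = 0 := by
      apply hinj
      rw [← h1, hQ, map_zero, mul_zero]
    rw [← RatFunc.num_div_denom f]
    exact div_mem (algebraMap_mem_closure δ _ hP) (algebraMap_mem_closure δ _ hQ)
  · intro f hf
    change D f = 0
    induction hf using Subfield.closure_induction with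
    | mem x hx =>
      rcases hx with ⟨a, ha, rfl⟩ | rfl
      · rw [hD, show δ a = 0 from ha, map_zero]
      · exact hX
    | one => exact D.map_one_eq_zero
    | add x y _ _ hx hy => rw [map_add, hx, hy, add_zero]
    | neg x _ hx => rw [map_neg, hx, neg_zero]
    | inv x _ hx => rw [D.leibniz_inv, hx, smul_zero]
    | mul x y _ _ hx hy => rw [D.leibniz, hx, hy, smul_zero, smul_zero, add_zero]
end

section
/- Let (K, δ) be a differential field and f ∈ K{x} an irreducible differential polynomial with nonzero separant s_f. Then [f] : s_f^∞ is the unique prime differential ideal of K{x} that contains f but contains no nonzero differential polynomial g with ord g < ord f. -/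
/-!
Write `n = ord f`, `s = s_f`, `B = K[x₀, …, xₙ]` and `P = [f] : s^∞`.

For `k ≥ 1` one has `δᵏ f = s · x_{n+k} + tₖ` with `tₖ` of order less than `n + k`
(`iterate_sub_mem`). Two consequences carry the proof.

* Every `h` is reducible to `B`: some `s ^ m * h` is congruent modulo `[f]` to an element of `B`
  (`exists_reduction`).
* The quotient map from `B` to the fraction field `L` of `B / (f)` extends to a ring homomorphism
  `φ : K{x} → L` killing `[f]`: the values `φ (x_{n+k}) = - φ (tₖ) / φ (s)` are forced one after
  the other (`exists_generic_hom`). This uses `φ s ≠ 0`, which holds because `f` does not divide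
  its nonzero separant, whose degree in `xₙ` is smaller.

Reduction shows that `P = ker φ`, so `P` is prime. As `φ` is the quotient map on `B`, an element
of `P ∩ B` is a multiple of `f`, hence is zero or involves `xₙ`.

For uniqueness, let `Q` be another such ideal. If `g ∈ Q ∩ B` were not a multiple of `f`, Gauss's
lemma and Bézout over the fraction field of `K[x₀, …, x_{n-1}]` would give a nonzero element of
`Q ∩ K[x₀, …, x_{n-1}]` (`exists_C_mem_span_pair`), which is impossible. Hence
`Q ∩ B = (f)`. In particular `s ∉ Q`, which gives `P ⊆ Q`, and reduction gives `Q ⊆ P`.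
-/

set_option synthInstance.maxHeartbeats 1000000
set_option maxHeartbeats 1000000

open MvPolynomial
noncomputable section
variable {K : Type*} [Field K]

/-- order of a differential polynomial -/
def ordOf (f : MvPolynomial ℕ K) : ℕ := f.vars.sup id

/-- separant -/
def sep (f : MvPolynomial ℕ K) : MvPolynomial ℕ K := pderiv (ordOf f) f

/-- rank of a differential polynomial -/
def rankOf (f : MvPolynomial ℕ K) : ℕ × ℕ := (ordOf f, f.degreeOf (ordOf f))

/-- the differential ideal generated by f -/
def diffIdeal (D : Derivation ℤ (MvPolynomial ℕ K) (MvPolynomial ℕ K))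
    (f : MvPolynomial ℕ K) : Ideal (MvPolynomial ℕ K) :=
  Ideal.span (Set.range fun n : ℕ => (⇑D)^[n] f)

/-- saturation I : s^∞ -/
def saturation {R : Type*} [CommRing R] (J : Ideal R) (s : R) : Ideal R where
  carrier := {h | ∃ m : ℕ, s ^ m * h ∈ J}
  zero_mem' := ⟨0, by simp⟩
  add_mem' := by
    rintro a b ⟨m, hm⟩ ⟨n, hn⟩
    refine ⟨m + n, ?_⟩
    have h : s ^ (m + n) * (a + b) = s ^ n * (s ^ m * a) + s ^ m * (s ^ n * b) := by ring
    rw [h]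
    exact J.add_mem (J.mul_mem_left _ hm) (J.mul_mem_left _ hn)
  smul_mem' := by
    rintro c a ⟨m, hm⟩
    refine ⟨m, ?_⟩
    have h : s ^ m * (c • a) = c * (s ^ m * a) := by rw [smul_eq_mul]; ring
    rw [h]
    exact J.mul_mem_left _ hm

/-- evaluation of a differential polynomial at a point of K -/
def evalD (δ : Derivation ℤ K K) (a : K) (f : MvPolynomial ℕ K) : K :=
  MvPolynomial.eval (fun n => (⇑δ)^[n] a) f

/-- the field of constants -/
def constants (δ : Derivation ℤ K K) : Subfield K where
  carrier := {a | δ a = 0}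
  zero_mem' := by simp
  one_mem' := by simp
  add_mem' := by intro a b ha hb; simp only [Set.mem_setOf_eq] at *; rw [map_add, ha, hb, add_zero]
  mul_mem' := by
    intro a b ha hb; simp only [Set.mem_setOf_eq] at *
    rw [Derivation.leibniz, ha, hb]; simp
  neg_mem' := by intro a ha; simp only [Set.mem_setOf_eq] at *; rw [map_neg, ha, neg_zero]
  inv_mem' := by
    intro a ha
    simp only [Set.mem_setOf_eq] at *
    rcases eq_or_ne a 0 with rfl | h
    · simp
    · have h1 : a * a⁻¹ = 1 := mul_inv_cancel₀ h
      have h2 : δ (a * a⁻¹) = 0 := by rw [h1]; exact δ.map_one_eq_zero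
      rw [Derivation.leibniz, ha] at h2
      simp only [smul_eq_mul, mul_zero, add_zero, zero_mul, smul_zero] at h2
      exact (mul_eq_zero.mp h2).resolve_left h

/-- the SDCF axiom scheme -/
def SDCFAx (δ : Derivation ℤ K K) : Prop :=
  ∀ f g : MvPolynomial ℕ K, f ≠ 0 → g ≠ 0 → sep f ≠ 0 → ordOf g < ordOf f →
    ∃ a : K, evalD δ a f = 0 ∧ evalD δ a g ≠ 0

/-! ### Polynomials of order at most `n` as univariate polynomials in `xₙ` -/

/-- `K[x₀, …, xₙ]`, as univariate polynomials in `xₙ` over `K[x₀, …, x_{n-1}]`. -/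
abbrev LowPoly (K : Type*) [Field K] (n : ℕ) := Polynomial (MvPolynomial (Fin n) K)

/-- The inclusion of `K[x₀, …, x_{n-1}][xₙ]` into `K{x}`. -/
def lowIncl (K : Type*) [Field K] (n : ℕ) : LowPoly K n →+* MvPolynomial ℕ K :=
  Polynomial.eval₂RingHom (rename (Fin.val : Fin n → ℕ)).toRingHom (X n)

/-- A retraction of `lowIncl`. The variables of index above `n` are sent to `xₙ`; this choice is
immaterial, as the map is only used on polynomials of order at most `n`. -/
def lowProj (K : Type*) [Field K] (n : ℕ) : MvPolynomial ℕ K →+* LowPoly K n :=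
  eval₂Hom (Polynomial.C.comp C)
    (fun i => if h : i < n then Polynomial.C (X ⟨i, h⟩) else Polynomial.X)

lemma lowIncl_C {n : ℕ} (a : MvPolynomial (Fin n) K) :
    lowIncl K n (Polynomial.C a) = rename (Fin.val : Fin n → ℕ) a := by
  simp [lowIncl]

lemma lowIncl_X {n : ℕ} : lowIncl K n Polynomial.X = X n := by
  simp [lowIncl]

lemma lowProj_C {n : ℕ} (a : K) : lowProj K n (C a) = Polynomial.C (C a) := by
  simp [lowProj]

lemma lowProj_X_of_lt {n i : ℕ} (h : i < n) :
    lowProj K n (X i) = Polynomial.C (X ⟨i, h⟩) := by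
  simp [lowProj, h]

lemma lowProj_X_self {n : ℕ} : lowProj K n (X n) = Polynomial.X := by
  simp [lowProj]

lemma lowProj_rename {n : ℕ} (a : MvPolynomial (Fin n) K) :
    lowProj K n (rename (Fin.val : Fin n → ℕ) a) = Polynomial.C a := by
  induction a using MvPolynomial.induction_on with
  | C a => rw [rename_C, lowProj_C]
  | add p q hp hq => rw [map_add, map_add, hp, hq, map_add]
  | mul_X p i hp => rw [map_mul, map_mul, hp, rename_X, lowProj_X_of_lt i.2, map_mul]

lemma lowProj_lowIncl {n : ℕ} (p : LowPoly K n) : lowProj K n (lowIncl K n p) = p := by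
  induction p using Polynomial.induction_on' with
  | add p q hp hq => rw [map_add, map_add, hp, hq]
  | monomial k a =>
    rw [← Polynomial.C_mul_X_pow_eq_monomial, map_mul, map_mul, map_pow, map_pow, lowIncl_C,
      lowIncl_X, lowProj_rename, lowProj_X_self]

lemma lowIncl_lowProj {n : ℕ} {p : MvPolynomial ℕ K} (hp : p ∈ supported K (Set.Iic n)) :
    lowIncl K n (lowProj K n p) = p := by
  refine Algebra.adjoin_induction (p := fun x _ => lowIncl K n (lowProj K n x) = x)
    ?_ ?_ ?_ ?_ hp
  · rintro _ ⟨i, hi, rfl⟩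
    rcases lt_or_eq_of_le (show i ≤ n from hi) with h | rfl
    · rw [lowProj_X_of_lt h, lowIncl_C, rename_X]
    · rw [lowProj_X_self, lowIncl_X]
  · intro r
    rw [algebraMap_eq, lowProj_C, lowIncl_C, rename_C]
  · intro x y _ _ hx hy
    rw [map_add, map_add, hx, hy]
  · intro x y _ _ hx hy
    rw [map_mul, map_mul, hx, hy]

lemma rename_mem_supported {n : ℕ} (a : MvPolynomial (Fin n) K) :
    rename (Fin.val : Fin n → ℕ) a ∈ supported K (Set.Iio n) := by
  induction a using MvPolynomial.induction_on with
  | C a => rw [rename_C]; exact (supported K (Set.Iio n)).algebraMap_mem a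
  | add p q hp hq => rw [map_add]; exact add_mem hp hq
  | mul_X p i hp =>
    rw [map_mul, rename_X]
    exact mul_mem hp (X_mem_supported.2 i.2)

lemma lowIncl_mem_supported {n : ℕ} (p : LowPoly K n) :
    lowIncl K n p ∈ supported K (Set.Iic n) := by
  induction p using Polynomial.induction_on' with
  | add p q hp hq => rw [map_add]; exact add_mem hp hq
  | monomial k a =>
    rw [← Polynomial.C_mul_X_pow_eq_monomial, map_mul, map_pow, lowIncl_C, lowIncl_X]
    exact mul_mem (supported_mono Set.Iio_subset_Iic_self (rename_mem_supported a))
      (pow_mem (X_mem_supported.2 (Set.mem_Iic.2 le_rfl)) k)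

lemma pderiv_lowIncl {n : ℕ} (p : LowPoly K n) :
    pderiv n (lowIncl K n p) = lowIncl K n (Polynomial.derivative p) := by
  have h0 : ∀ a : MvPolynomial (Fin n) K,
      pderiv n (rename (Fin.val : Fin n → ℕ) a) = 0 := by
    intro a
    refine pderiv_eq_zero_of_notMem_vars fun h => ?_
    exact lt_irrefl n (mem_supported.1 (rename_mem_supported a) h)
  induction p using Polynomial.induction_on' with
  | add p q hp hq => simp only [map_add, hp, hq]
  | monomial k a =>
    rw [← Polynomial.C_mul_X_pow_eq_monomial, Polynomial.derivative_C_mul_X_pow]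
    simp only [map_mul, map_pow, lowIncl_C, lowIncl_X, Derivation.leibniz, h0, map_natCast,
      Derivation.leibniz_pow, pderiv_X_self, smul_eq_mul, nsmul_eq_mul]
    ring

lemma mem_supported_ordOf (f : MvPolynomial ℕ K) : f ∈ supported K (Set.Iic (ordOf f)) :=
  mem_supported.2 fun _ hi => Finset.le_sup (f := id) hi

lemma natDegree_lowProj_eq_zero {n : ℕ} {g : MvPolynomial ℕ K} (hg : ordOf g < n) :
    (lowProj K n g).natDegree = 0 := by
  have hsub : (g.vars : Set ℕ) ⊆ Set.range (Fin.val : Fin n → ℕ) := fun i hi =>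
    ⟨⟨i, (Finset.le_sup (f := id) hi).trans_lt hg⟩, rfl⟩
  obtain ⟨q, rfl⟩ := exists_rename_eq_of_vars_subset_range g _ Fin.val_injective hsub
  rw [lowProj_rename, Polynomial.natDegree_C]

/-! ### Divisibility by an irreducible polynomial in `K[x₀, …, x_{n-1}][xₙ]` -/

lemma irreducible_lowProj {n : ℕ} {f : MvPolynomial ℕ K} (hf : Irreducible f)
    (hfn : f ∈ supported K (Set.Iic n)) : Irreducible (lowProj K n f) := by
  have hback : ∀ a, IsUnit (lowIncl K n a) → IsUnit a := fun a ha => by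
    simpa only [lowProj_lowIncl] using ha.map (lowProj K n)
  refine ⟨fun h => hf.not_isUnit ?_, fun a b hab => ?_⟩
  · simpa only [lowIncl_lowProj hfn] using h.map (lowIncl K n)
  · have h : f = lowIncl K n a * lowIncl K n b := by
      rw [← map_mul, ← hab, lowIncl_lowProj hfn]
    exact (hf.isUnit_or_isUnit h).imp (hback a) (hback b)

/-- Elimination of the main variable: over a UFD, an irreducible `p` of positive degree and a
polynomial `q` that is not a multiple of `p` generate an ideal containing a nonzero constant. -/
lemma exists_C_mem_span_pair {A : Type*} [CommRing A] [IsDomain A] [UniqueFactorizationMonoid A]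
    {p q : Polynomial A} (hp : Irreducible p) (hdeg : p.natDegree ≠ 0) (hpq : ¬ p ∣ q) :
    ∃ a : A, a ≠ 0 ∧ Polynomial.C a ∈ Ideal.span {p, q} := by
  classical
  let _ : NormalizedGCDMonoid A := Classical.choice inferInstance
  have hprim : p.IsPrimitive := hp.isPrimitive hdeg
  have hirr : Irreducible (p.map (algebraMap A (FractionRing A))) :=
    (hprim.irreducible_iff_irreducible_map_fraction_map).1 hp
  have hnd : ¬ p.map (algebraMap A (FractionRing A)) ∣ q.map (algebraMap A (FractionRing A)) := by
    intro h
    exact hpq (hprim.dvd_of_fraction_map_dvd_fraction_map h)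
  have hcop := (hirr.coprime_iff_not_dvd).2 hnd
  obtain ⟨a, b, hab⟩ := hcop
  -- `Frac(A)[X]` is the localization of `A[X]` at the nonzero constants.
  let _ : Algebra (Polynomial A) (Polynomial (FractionRing A)) :=
    (Polynomial.mapRingHom (algebraMap A (FractionRing A))).toAlgebra
  have hloc : IsLocalization ((nonZeroDivisors A).map (Polynomial.C : A →+* Polynomial A))
      (Polynomial (FractionRing A)) := Polynomial.isLocalization _ _
  have htop : (Ideal.span {p, q}).map
      (algebraMap (Polynomial A) (Polynomial (FractionRing A))) = ⊤ := by
    rw [Ideal.eq_top_iff_one, ← hab]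
    exact add_mem
      (Ideal.mul_mem_left _ _ (Ideal.mem_map_of_mem _ (Ideal.subset_span (by simp))))
      (Ideal.mul_mem_left _ _ (Ideal.mem_map_of_mem _ (Ideal.subset_span (by simp))))
  have hdis := mt (IsLocalization.map_algebraMap_ne_top_iff_disjoint
    ((nonZeroDivisors A).map (Polynomial.C : A →+* Polynomial A))
    (Polynomial (FractionRing A)) (Ideal.span {p, q})).2 (not_not.2 htop)
  obtain ⟨_, ⟨a, ha, rfl⟩, hx⟩ := Set.not_disjoint_iff.1 hdis
  exact ⟨a, nonZeroDivisors.ne_zero ha, hx⟩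

/-! ### Derivatives and reduction -/

lemma deriv_mem_supported {δ : Derivation ℤ K K}
    {D : Derivation ℤ (MvPolynomial ℕ K) (MvPolynomial ℕ K)}
    (hDX : ∀ n : ℕ, D (X n) = X (n + 1)) (hDC : ∀ a : K, D (C a) = C (δ a))
    {m : ℕ} {p : MvPolynomial ℕ K} (hp : p ∈ supported K (Set.Iic m)) :
    D p ∈ supported K (Set.Iic (m + 1)) := by
  have hle : supported K (Set.Iic m) ≤ supported K (Set.Iic (m + 1)) :=
    supported_mono (Set.Iic_subset_Iic.2 m.le_succ)
  refine Algebra.adjoin_induction (p := fun x _ => D x ∈ supported K (Set.Iic (m + 1)))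
    ?_ ?_ ?_ ?_ hp
  · rintro _ ⟨i, hi, rfl⟩
    rw [hDX]
    exact X_mem_supported.2 (Nat.succ_le_succ hi)
  · intro r
    rw [algebraMap_eq, hDC]
    exact (supported K (Set.Iic (m + 1))).algebraMap_mem _
  · intro x y _ _ hx hy
    rw [map_add]
    exact add_mem hx hy
  · intro x y hx' hy' hx hy
    rw [Derivation.leibniz, smul_eq_mul, smul_eq_mul]
    exact add_mem (mul_mem (hle hx') hy) (mul_mem (hle hy') hx)

/-- The derivative of a polynomial of order at most `m` is linear in `x_{m+1}`, with leading
coefficient the partial derivative at `x_m`. -/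
lemma deriv_sub_mem_supported {δ : Derivation ℤ K K}
    {D : Derivation ℤ (MvPolynomial ℕ K) (MvPolynomial ℕ K)}
    (hDX : ∀ n : ℕ, D (X n) = X (n + 1)) (hDC : ∀ a : K, D (C a) = C (δ a))
    {m : ℕ} {p : MvPolynomial ℕ K} (hp : p ∈ supported K (Set.Iic m)) :
    D p - pderiv m p * X (m + 1) ∈ supported K (Set.Iic m) := by
  refine Algebra.adjoin_induction
    (p := fun x _ => D x - pderiv m x * X (m + 1) ∈ supported K (Set.Iic m)) ?_ ?_ ?_ ?_ hp
  · rintro _ ⟨i, hi, rfl⟩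
    rw [hDX]
    rcases lt_or_eq_of_le (show i ≤ m from hi) with h | rfl
    · rw [pderiv_X_of_ne h.ne, zero_mul, sub_zero]
      exact X_mem_supported.2 h
    · rw [pderiv_X_self, one_mul, sub_self]
      exact zero_mem _
  · intro r
    rw [algebraMap_eq, hDC, pderiv_C, zero_mul, sub_zero]
    exact (supported K (Set.Iic m)).algebraMap_mem _
  · intro x y _ _ hx hy
    have h : D (x + y) - pderiv m (x + y) * X (m + 1) =
        (D x - pderiv m x * X (m + 1)) + (D y - pderiv m y * X (m + 1)) := by
      rw [map_add, map_add]; ring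
    rw [h]
    exact add_mem hx hy
  · intro x y hx' hy' hx hy
    have h : D (x * y) - pderiv m (x * y) * X (m + 1) =
        x * (D y - pderiv m y * X (m + 1)) + y * (D x - pderiv m x * X (m + 1)) := by
      simp only [Derivation.leibniz, smul_eq_mul]; ring
    rw [h]
    exact add_mem (mul_mem hx' hy) (mul_mem hy' hx)

lemma sep_mem_supported (f : MvPolynomial ℕ K) : sep f ∈ supported K (Set.Iic (ordOf f)) := by
  have h := pderiv_lowIncl (lowProj K (ordOf f) f)
  rw [lowIncl_lowProj (mem_supported_ordOf f)] at h
  rw [sep, h]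
  exact lowIncl_mem_supported _

/-- The `(k+1)`-st derivative of `f` is linear in its leader, with the separant of `f` as leading
coefficient. -/
lemma iterate_sub_mem {δ : Derivation ℤ K K}
    {D : Derivation ℤ (MvPolynomial ℕ K) (MvPolynomial ℕ K)}
    (hDX : ∀ n : ℕ, D (X n) = X (n + 1)) (hDC : ∀ a : K, D (C a) = C (δ a))
    (f : MvPolynomial ℕ K) (k : ℕ) :
    (⇑D)^[k + 1] f - sep f * X (ordOf f + k + 1) ∈ supported K (Set.Iic (ordOf f + k)) := by
  induction k with
  | zero => exact deriv_sub_mem_supported hDX hDC (mem_supported_ordOf f)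
  | succ k ih =>
    have h := deriv_mem_supported hDX hDC ih
    have e : (⇑D)^[k + 1 + 1] f - sep f * X (ordOf f + (k + 1) + 1) =
        D ((⇑D)^[k + 1] f - sep f * X (ordOf f + k + 1))
          + X (ordOf f + k + 1) * D (sep f) := by
      rw [Function.iterate_succ_apply' (⇑D) (k + 1) f, map_sub, Derivation.leibniz, hDX,
        smul_eq_mul, smul_eq_mul]
      simp only [← add_assoc]
      ring
    rw [e]
    refine add_mem h (mul_mem (X_mem_supported.2 (Set.mem_Iic.2 le_rfl)) ?_)
    exact supported_mono (Set.Iic_subset_Iic.2 (by omega))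
      (deriv_mem_supported hDX hDC (sep_mem_supported f))

/-- For an element `s` of a subalgebra `B`, the elements `h` some `s ^ m * h` of which is
congruent modulo `J` to an element of `B`. -/
def reducibleTo {R : Type*} [CommRing R] [Algebra K R] (B : Subalgebra K R) (J : Ideal R) (s : R)
    (hs : s ∈ B) : Subalgebra K R where
  carrier := {h | ∃ m : ℕ, ∃ r ∈ B, s ^ m * h - r ∈ J}
  algebraMap_mem' a := ⟨0, algebraMap K R a, B.algebraMap_mem a, by simp⟩
  add_mem' := by
    rintro a b ⟨m, r, hr, h⟩ ⟨m', r', hr', h'⟩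
    refine ⟨m + m', s ^ m' * r + s ^ m * r',
      add_mem (mul_mem (pow_mem hs _) hr) (mul_mem (pow_mem hs _) hr'), ?_⟩
    have e : s ^ (m + m') * (a + b) - (s ^ m' * r + s ^ m * r') =
        s ^ m' * (s ^ m * a - r) + s ^ m * (s ^ m' * b - r') := by ring
    rw [e]
    exact add_mem (J.mul_mem_left _ h) (J.mul_mem_left _ h')
  mul_mem' := by
    rintro a b ⟨m, r, hr, h⟩ ⟨m', r', hr', h'⟩
    refine ⟨m + m', r * r', mul_mem hr hr', ?_⟩
    have e : s ^ (m + m') * (a * b) - r * r' =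
        (s ^ m' * b) * (s ^ m * a - r) + r * (s ^ m' * b - r') := by ring
    rw [e]
    exact add_mem (J.mul_mem_left _ h) (J.mul_mem_left _ h')

/-- Ritt reduction: a power of the separant times `h` is congruent modulo `[f]` to a polynomial of
order at most that of `f`. -/
lemma exists_reduction {δ : Derivation ℤ K K}
    {D : Derivation ℤ (MvPolynomial ℕ K) (MvPolynomial ℕ K)}
    (hDX : ∀ n : ℕ, D (X n) = X (n + 1)) (hDC : ∀ a : K, D (C a) = C (δ a))
    (f h : MvPolynomial ℕ K) :
    ∃ m : ℕ, ∃ r ∈ supported K (Set.Iic (ordOf f)), sep f ^ m * h - r ∈ diffIdeal D f := by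
  let M := reducibleTo (supported K (Set.Iic (ordOf f))) (diffIdeal D f) (sep f)
    (sep_mem_supported f)
  have hX : ∀ i, X i ∈ M := by
    intro i
    induction i using Nat.strong_induction_on with
    | _ i ih =>
      rcases le_or_gt i (ordOf f) with hi | hi
      · exact ⟨0, X i, X_mem_supported.2 hi, by simp⟩
      · obtain ⟨k, rfl⟩ : ∃ k, i = ordOf f + k + 1 := ⟨i - ordOf f - 1, by omega⟩
        have hle : supported K (Set.Iic (ordOf f + k)) ≤ M := by
          refine Algebra.adjoin_le ?_
          rintro _ ⟨j, hj, rfl⟩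
          exact ih j (Nat.lt_succ_of_le hj)
        obtain ⟨m, r, hr, hmr⟩ := hle (iterate_sub_mem hDX hDC f k)
        refine ⟨m + 1, -r, neg_mem hr, ?_⟩
        have e : sep f ^ (m + 1) * X (ordOf f + k + 1) - -r =
            sep f ^ m * (⇑D)^[k + 1] f -
              (sep f ^ m * ((⇑D)^[k + 1] f - sep f * X (ordOf f + k + 1)) - r) := by ring
        rw [e]
        exact sub_mem (Ideal.mul_mem_left _ _ (Ideal.subset_span ⟨k + 1, rfl⟩)) hmr
  have hM : h ∈ M := by
    induction h using MvPolynomial.induction_on with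
    | C a => exact M.algebraMap_mem a
    | add p q hp hq => exact add_mem hp hq
    | mul_X p i hp => exact mul_mem hp (hX i)
  exact hM

/-! ### The generic zero of `f` -/

universe u

/-- A prime element `p` generates the kernel of a homomorphism to a field, namely of the map to the
fraction field of the quotient by `p`. -/
lemma exists_hom_field {T : Type u} [CommRing T] {p : T} (hp : Prime p) :
    ∃ (L : Type u) (_ : Field L) (ψ : T →+* L), ∀ q, ψ q = 0 ↔ p ∣ q := by
  have hprime : (Ideal.span {p}).IsPrime := (Ideal.span_singleton_prime hp.ne_zero).2 hp
  refine ⟨FractionRing (T ⧸ Ideal.span {p}), inferInstance,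
    (algebraMap (T ⧸ Ideal.span {p}) _).comp (Ideal.Quotient.mk _), fun q => ?_⟩
  rw [← Ideal.mem_span_singleton, ← Ideal.Quotient.eq_zero_iff_mem]
  exact map_eq_zero_iff _ (IsFractionRing.injective (T ⧸ Ideal.span {p})
    (FractionRing (T ⧸ Ideal.span {p})))

/-- The sequence `u` with `u i = H i v`, where `v` agrees with `u` below `i` and vanishes from `i`
on. -/
def strongRecSeq {L : Type*} [Zero L] (H : ℕ → (ℕ → L) → L) (i : ℕ) : L :=
  H i (fun j => if _ : j < i then strongRecSeq H j else 0)
termination_by i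

/-- Let `ψ` be a homomorphism from the polynomials of order at most `n = ord f` to a field, killing
`f` but not its separant. It extends to a homomorphism on `K{x}` killing the ideal `[f]`. -/
lemma exists_generic_hom {δ : Derivation ℤ K K}
    {D : Derivation ℤ (MvPolynomial ℕ K) (MvPolynomial ℕ K)}
    (hDX : ∀ n : ℕ, D (X n) = X (n + 1)) (hDC : ∀ a : K, D (C a) = C (δ a))
    (f : MvPolynomial ℕ K) {n : ℕ} (hn : n = ordOf f) {L : Type*} [Field L]
    (ψ : LowPoly K n →+* L)
    (hf : ψ (lowProj K n f) = 0) (hs : ψ (lowProj K n (sep f)) ≠ 0) :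
    ∃ φ : MvPolynomial ℕ K →+* L,
      (∀ r ∈ supported K (Set.Iic n), φ r = ψ (lowProj K n r)) ∧
      ∀ h ∈ diffIdeal D f, φ h = 0 := by
  let ι : K →+* L := ψ.comp (Polynomial.C.comp C)
  let t : ℕ → MvPolynomial ℕ K := fun i => (⇑D)^[i - n] f - sep f * X i
  let H : ℕ → (ℕ → L) → L := fun i v =>
    if i ≤ n then ψ (lowProj K n (X i))
    else - eval₂Hom ι v (t i) / ψ (lowProj K n (sep f))
  let u : ℕ → L := strongRecSeq H
  have hu : ∀ i, u i = H i (fun j => if _ : j < i then u j else 0) := by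
    intro i
    change strongRecSeq H i = _
    rw [strongRecSeq]
  have hlow : ∀ i ≤ n, u i = ψ (lowProj K n (X i)) := by
    intro i hi
    rw [hu]
    simp only [H, if_pos hi]
  let φ : MvPolynomial ℕ K →+* L := eval₂Hom ι u
  have hB : ∀ r ∈ supported K (Set.Iic n), φ r = ψ (lowProj K n r) := by
    intro r hr
    refine hom_congr_vars (f₁ := φ) (f₂ := ψ.comp (lowProj K n)) (p₁ := r) (p₂ := r) ?_ ?_ rfl
    · ext a
      simp [φ, ι, lowProj_C]
    · intro i hi _
      have : i ≤ n := mem_supported.1 hr hi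
      simp [φ, hlow i this]
  refine ⟨φ, hB, ?_⟩
  have hiter : ∀ k, φ ((⇑D)^[k] f) = 0 := by
    intro k
    rcases k with _ | k
    · rw [Function.iterate_zero_apply, hB f (hn ▸ mem_supported_ordOf f), hf]
    · have hmem := iterate_sub_mem hDX hDC f k
      rw [← hn] at hmem
      have ht : t (n + k + 1) = (⇑D)^[k + 1] f - sep f * X (n + k + 1) := by
        have : n + k + 1 - n = k + 1 := by omega
        simp only [t, this]
      have hφt : φ (t (n + k + 1)) =
          eval₂Hom ι (fun j => if _ : j < n + k + 1 then u j else 0) (t (n + k + 1)) := by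
        refine hom_congr_vars ?_ ?_ rfl
        · ext a
          simp [φ]
        · intro i hi _
          rw [ht] at hi
          have : i < n + k + 1 := Nat.lt_succ_of_le (mem_supported.1 hmem hi)
          simp only [φ, eval₂Hom_X', dif_pos this]
      have hux : φ (X (n + k + 1)) = - φ (t (n + k + 1)) / ψ (lowProj K n (sep f)) := by
        rw [hφt]
        have h1 : φ (X (n + k + 1)) = u (n + k + 1) := by simp [φ]
        rw [h1, hu]
        have h2 : ¬ n + k + 1 ≤ n := by omega
        simp only [H, if_neg h2]
      have hsum : (⇑D)^[k + 1] f = t (n + k + 1) + sep f * X (n + k + 1) := by rw [ht]; ring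
      rw [hsum, map_add, map_mul, hB (sep f) (hn ▸ sep_mem_supported f), hux,
        mul_div_cancel₀ _ hs, add_neg_cancel]
  have hle : diffIdeal D f ≤ RingHom.ker φ := by
    refine Ideal.span_le.2 ?_
    rintro _ ⟨k, rfl⟩
    exact RingHom.mem_ker.2 (hiter k)
  exact fun h hh => RingHom.mem_ker.1 (hle hh)

/-! ### The saturation as a differential ideal -/

lemma deriv_mem_diffIdeal (D : Derivation ℤ (MvPolynomial ℕ K) (MvPolynomial ℕ K))
    (f : MvPolynomial ℕ K) {h : MvPolynomial ℕ K} (hh : h ∈ diffIdeal D f) :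
    D h ∈ diffIdeal D f := by
  refine Submodule.span_induction (p := fun x _ => D x ∈ diffIdeal D f) ?_ ?_ ?_ ?_ hh
  · rintro _ ⟨k, rfl⟩
    exact Ideal.subset_span ⟨k + 1, Function.iterate_succ_apply' (⇑D) k f⟩
  · rw [map_zero]
    exact zero_mem _
  · intro x y _ _ hx hy
    rw [map_add]
    exact add_mem hx hy
  · intro a x hx' hx
    rw [smul_eq_mul, Derivation.leibniz, smul_eq_mul, smul_eq_mul]
    exact add_mem (Ideal.mul_mem_left _ _ hx) (Ideal.mul_mem_right _ _ hx')

lemma deriv_mem_saturation {R : Type*} [CommRing R] (D : Derivation ℤ R R) {J : Ideal R}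
    (hJ : ∀ h ∈ J, D h ∈ J) {s h : R} (hh : h ∈ saturation J s) : D h ∈ saturation J s := by
  obtain ⟨m, hm⟩ := hh
  refine ⟨m + 1, ?_⟩
  have e : s ^ (m + 1) * D h = s * D (s ^ m * h) - (m * D s) * (s ^ m * h) := by
    rw [Derivation.leibniz, Derivation.leibniz_pow, smul_eq_mul, smul_eq_mul, smul_eq_mul,
      nsmul_eq_mul]
    rcases m with _ | m
    · simp
    · simp only [Nat.add_sub_cancel]
      ring
  rw [e]
  exact sub_mem (J.mul_mem_left _ (hJ _ hm)) (J.mul_mem_left _ hm)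

lemma iterate_mem {R : Type*} [CommRing R] (D : Derivation ℤ R R) {Q : Ideal R}
    (hQ : ∀ h ∈ Q, D h ∈ Q) {f : R} (hf : f ∈ Q) (k : ℕ) : (⇑D)^[k] f ∈ Q := by
  induction k with
  | zero => exact hf
  | succ k ih => rw [Function.iterate_succ_apply']; exact hQ _ ih

/-- A prime ideal containing `f` and nothing nonzero of lower order meets the polynomials of order
at most `ord f` in the multiples of `f`. -/
lemma dvd_of_mem {f : MvPolynomial ℕ K} (hirr : Irreducible (lowProj K (ordOf f) f))
    (hdeg : (lowProj K (ordOf f) f).natDegree ≠ 0) {Q : Ideal (MvPolynomial ℕ K)}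
    (hQ : Q.IsPrime) (hfQ : f ∈ Q) (hlow : ∀ g ∈ Q, g ≠ 0 → ¬ ordOf g < ordOf f)
    {g : MvPolynomial ℕ K} (hg : g ∈ supported K (Set.Iic (ordOf f))) (hgQ : g ∈ Q) :
    lowProj K (ordOf f) f ∣ lowProj K (ordOf f) g := by
  by_contra hnd
  obtain ⟨a, ha, hmem⟩ := exists_C_mem_span_pair hirr hdeg hnd
  have hle : Ideal.span {lowProj K (ordOf f) f, lowProj K (ordOf f) g} ≤
      Q.comap (lowIncl K (ordOf f)) := by
    refine Ideal.span_le.2 ?_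
    rintro _ (rfl | rfl)
    · change lowIncl K _ _ ∈ Q
      rwa [lowIncl_lowProj (mem_supported_ordOf f)]
    · change lowIncl K _ _ ∈ Q
      rwa [lowIncl_lowProj hg]
  have haQ : rename (Fin.val : Fin (ordOf f) → ℕ) a ∈ Q := by
    have := hle hmem
    rwa [Ideal.mem_comap, lowIncl_C] at this
  have hane : rename (Fin.val : Fin (ordOf f) → ℕ) a ≠ 0 := fun h =>
    ha (rename_injective _ Fin.val_injective (h.trans (map_zero _).symm))
  have hvars := mem_supported.1 (rename_mem_supported a)
  rcases Nat.eq_zero_or_pos (ordOf f) with h0 | hpos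
  · -- In order zero the hypothesis on `Q` is void, but then `a` is a nonzero constant.
    have hempty : (rename (Fin.val : Fin (ordOf f) → ℕ) a).vars = ∅ := by
      refine Finset.eq_empty_of_forall_notMem fun i hi => ?_
      have : i < ordOf f := hvars hi
      omega
    obtain ⟨c, hc⟩ : ∃ c : K, rename (Fin.val : Fin (ordOf f) → ℕ) a = C c :=
      ⟨_, vars_eq_empty_iff_eq_C.1 hempty⟩
    rw [hc] at haQ hane
    have hc0 : c ≠ 0 := fun h => hane (by rw [h, map_zero])
    exact hQ.ne_top (Q.eq_top_of_isUnit_mem haQ ((isUnit_iff_ne_zero.2 hc0).map C))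
  · refine hlow _ haQ hane ((Finset.sup_lt_iff (by exact hpos)).2 fun i hi => ?_)
    exact hvars hi

/-- `[f] : s_f^∞` is the unique prime differential ideal of `K{x}` containing `f`
and containing no nonzero differential polynomial of order less than `ord f`. -/
theorem stmt9 {K : Type*} [Field K] (δ : Derivation ℤ K K)
    (D : Derivation ℤ (MvPolynomial ℕ K) (MvPolynomial ℕ K))
    (hDX : ∀ n : ℕ, D (X n) = X (n + 1))
    (hDC : ∀ a : K, D (C a) = C (δ a))
    (f : MvPolynomial ℕ K) (hf : Irreducible f) (hs : sep f ≠ 0) :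
    ((saturation (diffIdeal D f) (sep f)).IsPrime ∧
      (∀ h ∈ saturation (diffIdeal D f) (sep f),
        D h ∈ saturation (diffIdeal D f) (sep f)) ∧
      f ∈ saturation (diffIdeal D f) (sep f) ∧
      (∀ g ∈ saturation (diffIdeal D f) (sep f), g ≠ 0 → ¬ ordOf g < ordOf f)) ∧
    ∀ Q : Ideal (MvPolynomial ℕ K), Q.IsPrime → (∀ h ∈ Q, D h ∈ Q) → f ∈ Q →
      (∀ g ∈ Q, g ≠ 0 → ¬ ordOf g < ordOf f) →
      Q = saturation (diffIdeal D f) (sep f) := by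
  set n := ordOf f with hn
  have hfB : f ∈ supported K (Set.Iic n) := mem_supported_ordOf f
  have hsB : sep f ∈ supported K (Set.Iic n) := sep_mem_supported f
  have hirr : Irreducible (lowProj K n f) := irreducible_lowProj hf hfB
  have hsder : lowProj K n (sep f) = Polynomial.derivative (lowProj K n f) := by
    have h := pderiv_lowIncl (lowProj K n f)
    rw [lowIncl_lowProj hfB] at h
    rw [sep, ← hn, h, lowProj_lowIncl]
  have hder0 : Polynomial.derivative (lowProj K n f) ≠ 0 := by
    intro h
    rw [← hsder] at h
    exact hs (by rw [← lowIncl_lowProj hsB, h, map_zero])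
  have hdeg : (lowProj K n f).natDegree ≠ 0 := fun h =>
    hder0 (Polynomial.derivative_of_natDegree_zero h)
  have hsnd : ¬ lowProj K n f ∣ lowProj K n (sep f) := by
    rw [hsder]
    intro h
    exact absurd (Polynomial.natDegree_le_of_dvd h hder0)
      (not_le.2 (Polynomial.natDegree_derivative_lt hdeg))
  have hdvd : ∀ r ∈ supported K (Set.Iic n), lowProj K n f ∣ lowProj K n r →
      r ∈ diffIdeal D f := by
    rintro r hr ⟨q, hq⟩
    rw [← lowIncl_lowProj hr, hq, map_mul, lowIncl_lowProj hfB]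
    exact Ideal.mul_mem_right _ _ (Ideal.subset_span ⟨0, rfl⟩)
  have hfP : f ∈ diffIdeal D f := Ideal.subset_span ⟨0, rfl⟩
  -- If a multiple `s ^ m * h` reduces to an element of `(f)`, then `h` lies in the saturation.
  have hsat : ∀ (h r : MvPolynomial ℕ K) (m : ℕ), r ∈ supported K (Set.Iic n) →
      sep f ^ m * h - r ∈ diffIdeal D f → lowProj K n f ∣ lowProj K n r →
      h ∈ saturation (diffIdeal D f) (sep f) := by
    intro h r m hr hmr hd
    refine ⟨m, ?_⟩
    have := add_mem hmr (hdvd r hr hd)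
    rwa [sub_add_cancel] at this
  obtain ⟨L, _, ψ, hψ⟩ := exists_hom_field hirr.prime
  obtain ⟨φ, hφB, hφ0⟩ := exists_generic_hom hDX hDC f hn ψ ((hψ _).2 dvd_rfl)
    (fun h => hsnd ((hψ _).1 h))
  have hφs : φ (sep f) ≠ 0 := by
    rw [hφB _ hsB]
    exact fun h => hsnd ((hψ _).1 h)
  have hker : saturation (diffIdeal D f) (sep f) = RingHom.ker φ := by
    ext h
    rw [RingHom.mem_ker]
    constructor
    · rintro ⟨m, hm⟩
      have := hφ0 _ hm
      rw [map_mul, map_pow] at this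
      exact (mul_eq_zero.1 this).resolve_left (pow_ne_zero m hφs)
    · intro hh
      obtain ⟨m, r, hr, hmr⟩ := exists_reduction hDX hDC f h
      refine hsat h r m hr hmr ((hψ _).1 ?_)
      have := hφ0 _ hmr
      rw [map_sub, map_mul, hh, mul_zero, zero_sub, neg_eq_zero] at this
      rw [← hφB r hr, this]
  refine ⟨⟨hker ▸ RingHom.ker_isPrime φ,
    fun h hh => deriv_mem_saturation D (fun _ => deriv_mem_diffIdeal D f) hh,
    ⟨0, by simpa using hfP⟩, ?_⟩, ?_⟩
  · intro g hg hg0 hlt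
    have hgB : g ∈ supported K (Set.Iic n) :=
      supported_mono (Set.Iic_subset_Iic.2 hlt.le) (mem_supported_ordOf g)
    rw [hker, RingHom.mem_ker, hφB g hgB, hψ] at hg
    have hne : lowProj K n g ≠ 0 := fun h =>
      hg0 (by rw [← lowIncl_lowProj hgB, h, map_zero])
    have hle := Polynomial.natDegree_le_of_dvd hg hne
    rw [natDegree_lowProj_eq_zero hlt] at hle
    omega
  · intro Q hQ hQD hfQ hlow
    have hJQ : diffIdeal D f ≤ Q := by
      refine Ideal.span_le.2 ?_
      rintro _ ⟨k, rfl⟩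
      exact iterate_mem D hQD hfQ k
    have hsQ : sep f ∉ Q := fun h => hsnd (dvd_of_mem hirr hdeg hQ hfQ hlow hsB h)
    refine le_antisymm (fun h hh => ?_) ?_
    · obtain ⟨m, r, hr, hmr⟩ := exists_reduction hDX hDC f h
      refine hsat h r m hr hmr (dvd_of_mem hirr hdeg hQ hfQ hlow hr ?_)
      have := sub_mem (Q.mul_mem_left (sep f ^ m) hh) (hJQ hmr)
      rwa [sub_sub_cancel] at this
    · rintro h ⟨m, hm⟩
      exact (hQ.mem_or_mem (hJQ hm)).resolve_left fun h' => hsQ (hQ.mem_of_pow_mem m h')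
end
end

section
/- Let (K, δ) be a differential field and f ∈ K{x} irreducible with nonzero separant s_f, and set P = [f] : s_f^∞. Then the fraction field L of K{x}/P is a separable field extension of K. Moreover, writing a = x + P and n = ord f, the elements a, δa, ..., δ^{n-1}a form a separating transcendence basis of L over K. -/
/-!
Write `n = ord f`, `s = s_f` and `a_i` for the image of `x_i` in `L`. The basic fact is that each
proper derivative of `f` is linear in its leader with leading coefficient the separant:
`f^(k+1) = s · x_{n+k+1} + r_k` with `r_k ∈ K[x_0, …, x_{n+k}]` (`iterate_D_sub_mem`).

*Algebraic independence.* It has to be shown that `P` meets `K[x_0, …, x_{n-1}]` in `0`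
(`eq_zero_of_mem_saturation`). Since `f` is irreducible, `(f)` is prime; let `F` be the fraction
field of `K[x_0, x_1, …]/(f)`. Comparing degrees in `x_n`, neither `s` nor a nonzero element of
`K[x_0, …, x_{n-1}]` is divisible by `f`, so these have nonzero images in `F`. Keeping the images
of `x_0, …, x_n` and redefining those of `x_{n+k+1}` recursively as `-r_k/s`, one obtains a
`K`-algebra homomorphism to `F` that kills all of `[f]`, does not kill `s`, and is injective on
`K[x_0, …, x_{n-1}]`. It kills `P`, which gives the claim.

*Separability.* Over `E = K(a_0, …, a_{n-1})` the element `a_n` is a root of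
`f(a_0, …, a_{n-1}, T)`, and it is a simple root because `s ∉ P`; so `a_n` is separable over `E`.
The relations `s(a) · a_{n+k+1} + r_k(a) = 0` put all later `a_i` into the field generated by the
earlier ones, so the separable closure of `E` in `L` is all of `L`.
-/

set_option synthInstance.maxHeartbeats 1000000
set_option maxHeartbeats 1000000

open MvPolynomial
noncomputable section
variable {K : Type*} [Field K]

lemma ordOf_mem_vars {f : MvPolynomial ℕ K} (hs : sep f ≠ 0) : ordOf f ∈ f.vars := by
  by_contra h
  exact hs (pderiv_eq_zero_of_notMem_vars h)

lemma pderiv_mem_supported {S : Set ℕ} {f : MvPolynomial ℕ K} (n : ℕ)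
    (hf : f ∈ supported K S) : pderiv n f ∈ supported K S := by
  rw [supported_eq_adjoin_X] at hf
  induction hf using Algebra.adjoin_induction with
  | mem x hx =>
    obtain ⟨i, -, rfl⟩ := hx
    rw [pderiv_X, Pi.single_apply]
    split_ifs
    · exact one_mem _
    · exact zero_mem _
  | algebraMap r => simp [MvPolynomial.algebraMap_eq]
  | add x y _ _ hx hy => rw [map_add]; exact add_mem hx hy
  | mul x y hx' hy' hx hy =>
    rw [pderiv_mul]
    exact add_mem (mul_mem hx hy') (mul_mem hx' hy)

/-- Apart from the term `∂g/∂x_m · x_{m+1}`, the derivative of a differential polynomial of order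
at most `m` has order at most `m`. -/
lemma D_sub_mem (δ : Derivation ℤ K K)
    (D : Derivation ℤ (MvPolynomial ℕ K) (MvPolynomial ℕ K))
    (hDX : ∀ n : ℕ, D (X n) = X (n + 1)) (hDC : ∀ a : K, D (C a) = C (δ a))
    (m : ℕ) {g : MvPolynomial ℕ K} (hg : g ∈ supported K (Set.Iic m)) :
    D g - pderiv m g * X (m + 1) ∈ supported K (Set.Iic m) := by
  have hg' := hg
  rw [supported_eq_adjoin_X] at hg'
  induction hg' using Algebra.adjoin_induction with
  | mem x hx =>
    obtain ⟨i, hi, rfl⟩ := hx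
    rw [hDX, pderiv_X, Pi.single_apply]
    split_ifs with h
    · subst h; simp
    · rw [zero_mul, sub_zero, X_mem_supported]
      have : i ≤ m := hi
      simp only [Set.mem_Iic]; omega
  | algebraMap r =>
    rw [MvPolynomial.algebraMap_eq, hDC, pderiv_C, zero_mul, sub_zero]
    exact Subalgebra.algebraMap_mem _ _
  | add x y hx' hy' hx hy =>
    have := add_mem (hx hx') (hy hy')
    convert this using 1
    simp only [map_add]; ring
  | mul x y hx' hy' hx hy =>
    have := add_mem (mul_mem hx' (hy hy')) (mul_mem hy' (hx hx'))
    rw [← supported_eq_adjoin_X] at this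
    convert this using 1
    rw [Derivation.leibniz, pderiv_mul]
    simp only [smul_eq_mul]; ring

lemma D_mem (δ : Derivation ℤ K K)
    (D : Derivation ℤ (MvPolynomial ℕ K) (MvPolynomial ℕ K))
    (hDX : ∀ n : ℕ, D (X n) = X (n + 1)) (hDC : ∀ a : K, D (C a) = C (δ a))
    (m : ℕ) {g : MvPolynomial ℕ K} (hg : g ∈ supported K (Set.Iic m)) :
    D g ∈ supported K (Set.Iic (m + 1)) := by
  have h1 := supported_mono (R := K) (Set.Iic_subset_Iic.2 (Nat.le_succ m))
    (D_sub_mem δ D hDX hDC m hg)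
  have h2 := supported_mono (R := K) (Set.Iic_subset_Iic.2 (Nat.le_succ m))
    (pderiv_mem_supported m hg)
  have h3 : (X (m + 1) : MvPolynomial ℕ K) ∈ supported K (Set.Iic (m + 1)) := by
    rw [X_mem_supported]; simp
  have := add_mem h1 (mul_mem h2 h3)
  simpa using this

/-- Every proper derivative of `f` is linear in its leader, with the separant as leading
coefficient: `f^(k+1) = s_f · x_{n+k+1} + (terms of order at most n+k)`. -/
lemma iterate_D_sub_mem (δ : Derivation ℤ K K)
    (D : Derivation ℤ (MvPolynomial ℕ K) (MvPolynomial ℕ K))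
    (hDX : ∀ n : ℕ, D (X n) = X (n + 1)) (hDC : ∀ a : K, D (C a) = C (δ a))
    (f : MvPolynomial ℕ K) (k : ℕ) :
    (⇑D)^[k + 1] f - sep f * X (ordOf f + k + 1) ∈ supported K (Set.Iic (ordOf f + k)) := by
  induction k with
  | zero => exact D_sub_mem δ D hDX hDC _ (mem_supported_ordOf f)
  | succ k ih =>
    have h1 := D_mem δ D hDX hDC _ ih
    have h2 : D (sep f) ∈ supported K (Set.Iic (ordOf f + (k + 1))) :=
      supported_mono (Set.Iic_subset_Iic.2 (by omega))
        (D_mem δ D hDX hDC _ (pderiv_mem_supported (ordOf f) (mem_supported_ordOf f)))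
    have h3 : (X (ordOf f + k + 1) : MvPolynomial ℕ K) ∈
        supported K (Set.Iic (ordOf f + (k + 1))) := by
      rw [X_mem_supported, Set.mem_Iic]; omega
    have := add_mem h1 (mul_mem h2 h3)
    rw [add_assoc (ordOf f) k 1] at this
    convert this using 1
    rw [Function.iterate_succ_apply', map_sub, Derivation.leibniz, hDX]
    simp only [smul_eq_mul]
    ring_nf

/-! ### Divisibility by `f` -/

lemma degreeOf_sep_lt {f : MvPolynomial ℕ K} (hs : sep f ≠ 0) :
    degreeOf (ordOf f) (sep f) < degreeOf (ordOf f) f := by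
  have hpos : 0 < degreeOf (ordOf f) f :=
    Nat.pos_of_ne_zero (mem_vars_iff_degreeOf_ne_zero.1 (ordOf_mem_vars hs))
  rw [degreeOf_lt_iff hpos]
  intro m hm
  rw [mem_support_iff, sep, coeff_pderiv] at hm
  have h1 : m + Finsupp.single (ordOf f) 1 ∈ f.support := by
    rw [mem_support_iff]
    intro h
    simp [h] at hm
  have := le_degreeOf_of_mem_support (ordOf f) h1
  simp at this
  omega

lemma eq_zero_of_dvd_of_degreeOf_lt {f g : MvPolynomial ℕ K} (n : ℕ) (hfg : f ∣ g)
    (h : degreeOf n g < degreeOf n f) : g = 0 := by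
  obtain ⟨q, rfl⟩ := hfg
  by_contra h0
  rw [degreeOf_mul_eq (left_ne_zero_of_mul h0) (right_ne_zero_of_mul h0)] at h
  omega

/-! ### A zero of `[f]` that is generic for elements of order less than `ord f` -/

lemma aeval_congr_supported {A : Type*} [CommRing A] [Algebra K A] {S : Set ℕ}
    {a b : ℕ → A} (hab : ∀ i ∈ S, a i = b i) {g : MvPolynomial ℕ K} (hg : g ∈ supported K S) :
    aeval a g = aeval b g := by
  rw [mem_supported] at hg
  exact eval₂Hom_congr' rfl (fun i hi _ => hab i (hg hi)) rfl

/-- The sequence that starts with `y₀ 0, …, y₀ n` and continues so that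
`s · y (n+k+1) + r k (y) = 0` for all `k`. In the recursive call the entries `y i` with `i` too
large are replaced by `0`, which is harmless when `r k` involves only `x_0, …, x_{n+k}`. -/
def extendSeq {F : Type*} [Field F] [Algebra K F] (n : ℕ) (y₀ : ℕ → F) (s : F)
    (r : ℕ → MvPolynomial ℕ K) (j : ℕ) : F :=
  if j ≤ n then y₀ j
  else -(aeval (fun i => if i < j then extendSeq n y₀ s r i else 0) (r (j - n - 1))) / s
termination_by j

lemma extendSeq_of_le {F : Type*} [Field F] [Algebra K F] {n : ℕ} {y₀ : ℕ → F} {s : F}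
    {r : ℕ → MvPolynomial ℕ K} {j : ℕ} (hj : j ≤ n) : extendSeq n y₀ s r j = y₀ j := by
  rw [extendSeq, if_pos hj]

lemma extendSeq_spec {F : Type*} [Field F] [Algebra K F] {n : ℕ} {y₀ : ℕ → F} {s : F}
    (hs : s ≠ 0) {r : ℕ → MvPolynomial ℕ K} (hr : ∀ k, r k ∈ supported K (Set.Iic (n + k)))
    (k : ℕ) :
    s * extendSeq n y₀ s r (n + k + 1) + aeval (extendSeq n y₀ s r) (r k) = 0 := by
  have h : aeval (extendSeq n y₀ s r) (r k) =
      aeval (fun i => if i < n + k + 1 then extendSeq n y₀ s r i else 0) (r k) := by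
    refine aeval_congr_supported (fun i hi => ?_) (hr k)
    have : i ≤ n + k := hi
    rw [if_pos (by omega)]
  rw [extendSeq, if_neg (by omega), h, show n + k + 1 - n - 1 = k by omega]
  field_simp
  ring

/-- The saturation `[f] : s_f^∞` contains no nonzero differential polynomial of order less than
`ord f`: such a polynomial does not vanish at the zero of `[f]` obtained by extending the generic
point of `f` in `Frac (K{x}/(f))`. -/
lemma eq_zero_of_mem_saturation (δ : Derivation ℤ K K)
    (D : Derivation ℤ (MvPolynomial ℕ K) (MvPolynomial ℕ K))
    (hDX : ∀ n : ℕ, D (X n) = X (n + 1)) (hDC : ∀ a : K, D (C a) = C (δ a))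
    {f : MvPolynomial ℕ K} (hf : Irreducible f) (hs : sep f ≠ 0) {g : MvPolynomial ℕ K}
    (hg : g ∈ saturation (diffIdeal D f) (sep f)) (hgn : g ∈ supported K (Set.Iio (ordOf f))) :
    g = 0 := by
  have hdeg : 0 < degreeOf (ordOf f) f :=
    Nat.pos_of_ne_zero (mem_vars_iff_degreeOf_ne_zero.1 (ordOf_mem_vars hs))
  have : (Ideal.span {f}).IsPrime :=
    (Ideal.span_singleton_prime hf.ne_zero).2 hf.prime
  let F := FractionRing (MvPolynomial ℕ K ⧸ Ideal.span {f})
  let φ : MvPolynomial ℕ K →ₐ[K] F :=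
    (IsScalarTower.toAlgHom K (MvPolynomial ℕ K ⧸ Ideal.span {f}) F).comp
      (Ideal.Quotient.mkₐ K (Ideal.span {f}))
  have hφ : ∀ p, φ p = 0 ↔ f ∣ p := by
    intro p
    change algebraMap (MvPolynomial ℕ K ⧸ Ideal.span {f}) F
      (Ideal.Quotient.mk (Ideal.span {f}) p) = 0 ↔ _
    rw [IsFractionRing.to_map_eq_zero_iff, Ideal.Quotient.eq_zero_iff_mem,
      Ideal.mem_span_singleton]
  have hφ' : φ = aeval (fun i => φ (X i)) := aeval_unique φ
  have hφs : φ (sep f) ≠ 0 := fun h =>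
    hs (eq_zero_of_dvd_of_degreeOf_lt _ ((hφ _).1 h) (degreeOf_sep_lt hs))
  let r : ℕ → MvPolynomial ℕ K := fun k =>
    (⇑D)^[k + 1] f - sep f * X (ordOf f + k + 1)
  have hr : ∀ k, r k ∈ supported K (Set.Iic (ordOf f + k)) :=
    iterate_D_sub_mem δ D hDX hDC f
  let y : ℕ → F := extendSeq (ordOf f) (fun i => φ (X i)) (φ (sep f)) r
  have hy : ∀ p ∈ supported K (Set.Iic (ordOf f)), aeval y p = φ p := by
    intro p hp
    rw [hφ']
    exact aeval_congr_supported (fun i hi => extendSeq_of_le hi) hp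
  have hysep : aeval y (sep f) = φ (sep f) :=
    hy _ (pderiv_mem_supported _ (mem_supported_ordOf f))
  have hyD : ∀ k, aeval y ((⇑D)^[k] f) = 0 := by
    intro k
    cases k with
    | zero =>
      rw [Function.iterate_zero_apply, hy _ (mem_supported_ordOf f)]
      exact (hφ f).2 dvd_rfl
    | succ k =>
      have h1 : (⇑D)^[k + 1] f = sep f * X (ordOf f + k + 1) + r k := by
        simp only [r]; ring
      rw [h1, map_add, map_mul, hysep, aeval_X]
      exact extendSeq_spec hφs hr k
  obtain ⟨m, hm⟩ := hg
  have hle : diffIdeal D f ≤ RingHom.ker (aeval y : MvPolynomial ℕ K →ₐ[K] F) := by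
    rw [diffIdeal, Ideal.span_le]
    rintro _ ⟨k, rfl⟩
    exact hyD k
  have h0 : aeval y (sep f ^ m * g) = 0 := hle hm
  rw [map_mul, map_pow, hysep, hy g (supported_mono Set.Iio_subset_Iic_self hgn)] at h0
  have h1 : f ∣ g := (hφ g).1 ((mul_eq_zero.1 h0).resolve_left (pow_ne_zero _ hφs))
  refine eq_zero_of_dvd_of_degreeOf_lt (ordOf f) h1 ?_
  have h2 : degreeOf (ordOf f) g = 0 := by
    by_contra h
    have := (mem_supported.1 hgn) (mem_vars_iff_degreeOf_ne_zero.2 h)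
    simp at this
  rwa [h2]

/-! ### Separability -/

/-- A simple root of a polynomial over a field is separable over that field. -/
lemma isSeparable_of_aeval_derivative_ne_zero {E L : Type*} [Field E] [Field L] [Algebra E L]
    {x : L} {q : Polynomial E} (h0 : Polynomial.aeval x q = 0)
    (h1 : Polynomial.aeval x (Polynomial.derivative q) ≠ 0) : IsSeparable E x := by
  have hq : q ≠ 0 := by
    rintro rfl
    simp at h1
  have hint : IsIntegral E x := IsAlgebraic.isIntegral ⟨q, hq, h0⟩
  rw [IsSeparable, Polynomial.separable_iff_derivative_ne_zero (minpoly.irreducible hint)]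
  intro h
  obtain ⟨c, rfl⟩ := minpoly.dvd E x h0
  apply h1
  rw [Polynomial.derivative_mul, h]
  simp

lemma isSeparable_of_aeval_pderiv_ne_zero {L : Type*} [Field L] [Algebra K L]
    (E : IntermediateField K L) {a : ℕ → L} {n : ℕ} (ha : ∀ i < n, a i ∈ E)
    {f : MvPolynomial ℕ K} (hf : f ∈ supported K (Set.Iic n)) (h0 : aeval a f = 0)
    (h1 : aeval a (pderiv n f) ≠ 0) : IsSeparable E (a n) := by
  classical
  let v : ℕ → Polynomial E := fun i =>
    if h : i < n then Polynomial.C ⟨a i, ha i h⟩ else if i = n then Polynomial.X else 0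
  have hv : ∀ p ∈ supported K (Set.Iic n),
      Polynomial.aeval (a n) (aeval v p) = aeval a p := by
    intro p hp
    have : ((Polynomial.aeval (a n) : Polynomial E →ₐ[E] L).restrictScalars K).comp (aeval v) =
        (aeval fun i => Polynomial.aeval (a n) (v i) : MvPolynomial ℕ K →ₐ[K] L) := by
      ext i; simp
    refine (DFunLike.congr_fun this p).trans (aeval_congr_supported (fun i hi => ?_) hp)
    have hi : i ≤ n := hi
    rcases hi.lt_or_eq with h | rfl
    · simp only [v, dif_pos h, Polynomial.aeval_C]; rfl
    · simp [v]
  have hd : ∀ p : MvPolynomial ℕ K,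
      Polynomial.derivative (aeval v p) = aeval v (pderiv n p) := by
    intro p
    induction p using MvPolynomial.induction_on with
    | C c =>
      rw [aeval_C, pderiv_C, map_zero, IsScalarTower.algebraMap_apply K E (Polynomial E)]
      exact Polynomial.derivative_C
    | add p q hp hq => simp only [map_add, hp, hq]
    | mul_X p i hp =>
      have hi : Polynomial.derivative (v i) = aeval v (pderiv n (X i : MvPolynomial ℕ K)) := by
        rw [pderiv_X, Pi.single_apply]
        simp only [v]
        split_ifs <;> first | omega | simp
      rw [pderiv_mul, map_mul, Polynomial.derivative_mul, map_add, map_mul, map_mul, aeval_X,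
        hp, hi]
  refine isSeparable_of_aeval_derivative_ne_zero (q := aeval v f) ?_ ?_
  · rw [hv f hf, h0]
  · rwa [hd, hv _ (pderiv_mem_supported n hf)]

/-- For `f` irreducible with nonzero separant and `P = [f] : s_f^∞`, the fraction field
`L` of `K{x}/P` is a separable extension of `K`; indeed, writing `a = x + P` and
`n = ord f`, the elements `a, δa, …, δ^{n-1}a` (the images of `x₀, …, x_{n-1}`) form a
separating transcendence basis of `L` over `K`: they are algebraically independent over
`K` and `L` is separably algebraic over the intermediate field they generate. -/
theorem stmt10 {K : Type*} [Field K] (δ : Derivation ℤ K K)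
    (D : Derivation ℤ (MvPolynomial ℕ K) (MvPolynomial ℕ K))
    (hDX : ∀ n : ℕ, D (X n) = X (n + 1))
    (hDC : ∀ a : K, D (C a) = C (δ a))
    (f : MvPolynomial ℕ K) (hf : Irreducible f) (hs : sep f ≠ 0)
    (P : Ideal (MvPolynomial ℕ K)) [P.IsPrime]
    (hPdef : P = saturation (diffIdeal D f) (sep f)) :
    AlgebraicIndependent K
      (fun i : Fin (ordOf f) =>
        algebraMap (MvPolynomial ℕ K ⧸ P) (FractionRing (MvPolynomial ℕ K ⧸ P))
          (Ideal.Quotient.mk P (X (i : ℕ)))) ∧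
    Algebra.IsSeparable
      (IntermediateField.adjoin K
        (Set.range fun i : Fin (ordOf f) =>
          algebraMap (MvPolynomial ℕ K ⧸ P) (FractionRing (MvPolynomial ℕ K ⧸ P))
            (Ideal.Quotient.mk P (X (i : ℕ)))))
      (FractionRing (MvPolynomial ℕ K ⧸ P)) := by
  have hle : diffIdeal D f ≤ P := by
    intro g hg
    rw [hPdef]
    exact ⟨0, by simpa using hg⟩
  have hfP : ∀ k, (⇑D)^[k] f ∈ P := fun k => hle (Ideal.subset_span ⟨k, rfl⟩)
  have hsP : sep f ∉ P := by
    intro h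
    rw [hPdef] at h
    obtain ⟨m, hm⟩ := h
    apply Ideal.IsPrime.ne_top (I := P) inferInstance
    rw [Ideal.eq_top_iff_one, hPdef]
    exact ⟨m + 1, by rwa [mul_one, pow_succ]⟩
  let L := FractionRing (MvPolynomial ℕ K ⧸ P)
  let φ : MvPolynomial ℕ K →ₐ[K] L :=
    (IsScalarTower.toAlgHom K (MvPolynomial ℕ K ⧸ P) L).comp (Ideal.Quotient.mkₐ K P)
  let a : ℕ → L := fun i => φ (X i)
  have hφ' : φ = aeval a := aeval_unique φ
  have hφ : ∀ p : MvPolynomial ℕ K, aeval a p = 0 ↔ p ∈ P := by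
    intro p
    rw [← hφ']
    change algebraMap (MvPolynomial ℕ K ⧸ P) L (Ideal.Quotient.mk P p) = 0 ↔ _
    rw [IsFractionRing.to_map_eq_zero_iff, Ideal.Quotient.eq_zero_iff_mem]
  change AlgebraicIndependent K (fun i : Fin (ordOf f) => a i) ∧
    Algebra.IsSeparable
      (IntermediateField.adjoin K (Set.range fun i : Fin (ordOf f) => a i)) L
  constructor
  · rw [algebraicIndependent_iff]
    intro p hp
    have h1 : rename (Fin.val : Fin (ordOf f) → ℕ) p ∈ P := by
      rw [← hφ, aeval_rename]
      exact hp
    rw [hPdef] at h1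
    have h2 : rename (Fin.val : Fin (ordOf f) → ℕ) p ∈ supported K (Set.Iio (ordOf f)) := by
      classical
      rw [mem_supported]
      intro i hi
      obtain ⟨j, -, rfl⟩ := Finset.mem_image.1 (vars_rename _ _ hi)
      exact j.2
    exact (map_eq_zero_iff _ (rename_injective _ Fin.val_injective)).1
      (eq_zero_of_mem_saturation δ D hDX hDC hf hs h1 h2)
  · set E := IntermediateField.adjoin K (Set.range fun i : Fin (ordOf f) => a i) with hE
    have haE : ∀ i < ordOf f, a i ∈ E := fun i hi =>
      IntermediateField.subset_adjoin K _ ⟨⟨i, hi⟩, rfl⟩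
    have hsa : aeval a (sep f) ≠ 0 := fun h => hsP ((hφ _).1 h)
    let M : IntermediateField K L := (separableClosure E L).restrictScalars K
    have hEM : ∀ x ∈ E, x ∈ M := fun x hx =>
      (separableClosure E L).algebraMap_mem ⟨x, hx⟩
    have haM : ∀ i, a i ∈ M := by
      intro i
      induction i using Nat.strong_induction_on with
      | _ i ih =>
        rcases lt_trichotomy i (ordOf f) with h | h | h
        · exact hEM _ (haE i h)
        · subst h
          exact (mem_separableClosure_iff (F := E) (E := L)).2 (isSeparable_of_aeval_pderiv_ne_zero E haE
            (mem_supported_ordOf f) ((hφ f).2 (hfP 0)) hsa)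
        · obtain ⟨k, rfl⟩ : ∃ k, i = ordOf f + k + 1 := ⟨i - ordOf f - 1, by omega⟩
          have hmem : ∀ p ∈ supported K (Set.Iic (ordOf f + k)), aeval a p ∈ M := by
            intro p hp
            rw [supported_eq_adjoin_X] at hp
            induction hp using Algebra.adjoin_induction with
            | mem x hx =>
              obtain ⟨j, hj, rfl⟩ := hx
              rw [aeval_X]
              exact ih j (Nat.lt_succ_of_le hj)
            | algebraMap r => rw [AlgHom.commutes]; exact M.algebraMap_mem r
            | add x y _ _ hx hy => rw [map_add]; exact add_mem hx hy
            | mul x y _ _ hx hy => rw [map_mul]; exact mul_mem hx hy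
          have h1 := hmem _ (iterate_D_sub_mem δ D hDX hDC f k)
          have h2 : aeval a (sep f) ∈ M := hmem _ (supported_mono
            (Set.Iic_subset_Iic.2 (by omega))
            (pderiv_mem_supported (ordOf f) (mem_supported_ordOf f)))
          -- the relation `f^(k+1) ∈ P` expresses `a_{n+k+1}` through its predecessors
          rw [map_sub, map_mul, (hφ _).2 (hfP (k + 1)), aeval_X, zero_sub] at h1
          have h3 := div_mem (neg_mem h1) h2
          rwa [neg_neg, mul_div_cancel_left₀ _ hsa] at h3
    have hφM : ∀ p : MvPolynomial ℕ K, aeval a p ∈ M := by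
      intro p
      induction p using MvPolynomial.induction_on with
      | C c => rw [aeval_C]; exact M.algebraMap_mem c
      | add p q hp hq => rw [map_add]; exact add_mem hp hq
      | mul_X p i hp => rw [map_mul, aeval_X]; exact mul_mem hp (haM i)
    rw [← separableClosure.eq_top_iff, eq_top_iff]
    rintro z -
    obtain ⟨x, y, -, rfl⟩ := IsFractionRing.div_surjective (A := MvPolynomial ℕ K ⧸ P) z
    obtain ⟨x, rfl⟩ := Ideal.Quotient.mk_surjective x
    obtain ⟨y, rfl⟩ := Ideal.Quotient.mk_surjective y
    have hx := hφM x
    have hy := hφM y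
    rw [← hφ'] at hx hy
    exact div_mem hx hy
end
end
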